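/- Suppose Assumption (Coefficients) holds, that c, f, φ ∈ C(ℝⁿ) with c(x) ≥ c₀ for all x ∈ ℝⁿ for some constant c₀ > 0, and that lim_{y→0} F(x,y) = 0 for every x ∈ ℝⁿ. Then the stationary obstacle problem min{−Lw + c w − f, w − φ} = 0 on ℝⁿ has at most one bounded viscosity solution: if v₁ and v₂ are bounded viscosity solutions, then v₁ = v₂ on ℝⁿ. -/

import Mathlib

/-!
The theorem follows from a comparison principle (`comparison`): a bounded subsolution `v₁` lies
below a bounded supersolution `v₂`. The proof doubles variables with the penalization
`a ψ(x - y) + δ ψ(x) + δ ψ(y)`, where `ψ(x) = ½ log (1 + |x|²)`. This `ψ` is a test function, it is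
coercive, and its increments along jumps are controlled by `|h|²/(1 + |x|²)` (`psi_step`), so the
`L²`-Lipschitz condition on `F` bounds the nonlocal contribution by `a|x - y|²` and by `δ`, uniformly
in the base point (`psi_step_compare`, `doubling_ineq`). With `δ` small and fixed, letting `a → ∞`
makes the maxima collapse onto one point, where the zeroth order term `c (v₁ - v₂) ≥ c₀ (v₁ - v₂)`
gives a contradiction.

Since test functions must be globally `C²`, the equations are first available only for smooth
functions above `v₁` and `-v₂`. These are lowered to `v₁` and `-v₂` themselves by approximation
(`exists_approx`) and dominated convergence (`nonlocal_le`). This needs the integrands to be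
integrable, which is governed by `jumpGauge h = min (|h|², |h|)` along the jumps. By the
`L²`-Lipschitz condition this gauge of `F x` is integrable either for every `x` or for no `x`. In the
second case a test function can be raised away from the contact point until its integrand fails to
be integrable (`exists_not_integrable`), the Bochner integral is then `0` by convention, and only
first order inequalities remain, which are even easier to compare.
-/

open MeasureTheory
open scoped RealInnerProductSpace ENNReal

noncomputable section

/-- `ℝⁿ` with the Euclidean inner product and norm. -/
abbrev En (n : ℕ) := EuclideanSpace ℝ (Fin n)

/-- Test functions: `C²` functions with bounded first and second derivatives. -/
def IsTestFn {n : ℕ} (u : En n → ℝ) : Prop :=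
  ContDiff ℝ 2 u ∧ (∃ M, ∀ x, ‖fderiv ℝ u x‖ ≤ M) ∧ (∃ M, ∀ x, ‖fderiv ℝ (fderiv ℝ u) x‖ ≤ M)

/-- The nonlocal operator
`Lu(x) = b(x)·∇u(x) + ∫_{ℝⁿ\{0}} (u(x + F(x,y)) − u(x) − ∇u(x)·F(x,y)) ν(dy)`. -/
def Lop {n : ℕ} (ν : Measure (En n)) (F : En n → En n → En n) (b : En n → En n)
    (u : En n → ℝ) (x : En n) : ℝ :=
  ⟪b x, gradient u x⟫ +
    ∫ y in {(0 : En n)}ᶜ, (u (x + F x y) - u x - ⟪gradient u x, F x y⟫) ∂ν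

/-- Assumption (Coefficients): there are `K > 0` and a measurable `ρ : ℝⁿ → [0,∞)` such that
(i) `∫ |F(x₁,y) − F(x₂,y)|² ν(dy) ≤ K|x₁ − x₂|²`;
(ii) `sup_{z ∈ B(0,|y|)} |F(x,z)| ≤ ρ(y)` and `∫ (max(|y|, ρ(y)))² ν(dy) ≤ K`;
(iii) `b` is bounded and Lipschitz. -/
def CoefficientsAssumption {n : ℕ} (ν : Measure (En n)) (F : En n → En n → En n)
    (b : En n → En n) (ρ : En n → ℝ) (K : ℝ) : Prop :=
  0 < K ∧
  Measurable (Function.uncurry F) ∧ Measurable ρ ∧ (∀ y, 0 ≤ ρ y) ∧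
  (∀ x₁ x₂ : En n,
    ∫⁻ y in {(0 : En n)}ᶜ, ENNReal.ofReal (‖F x₁ y - F x₂ y‖ ^ 2) ∂ν
      ≤ ENNReal.ofReal (K * ‖x₁ - x₂‖ ^ 2)) ∧
  (∀ x y : En n, ∀ z ∈ Metric.ball (0 : En n) ‖y‖, ‖F x z‖ ≤ ρ y) ∧
  (∫⁻ y in {(0 : En n)}ᶜ, ENNReal.ofReal ((max ‖y‖ (ρ y)) ^ 2) ∂ν ≤ ENNReal.ofReal K) ∧
  (∃ M, ∀ x, ‖b x‖ ≤ M) ∧ (∃ β : NNReal, LipschitzWith β b)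

/-- A bounded continuous `v` is a viscosity subsolution of
`min{−Lv + c v − f, v − φ} = 0` on `ℝⁿ`. -/
def IsViscositySubsolution {n : ℕ} (ν : Measure (En n)) (F : En n → En n → En n)
    (b : En n → En n) (c f φ : En n → ℝ) (v : En n → ℝ) : Prop :=
  Continuous v ∧ (∃ M, ∀ x, |v x| ≤ M) ∧
  ∀ u : En n → ℝ, IsTestFn u → ∀ x₀ : En n,
    (∀ x, v x - u x ≤ v x₀ - u x₀) → u x₀ = v x₀ →
    min (-(Lop ν F b u x₀) + c x₀ * u x₀ - f x₀) (u x₀ - φ x₀) ≤ 0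

/-- A bounded continuous `v` is a viscosity supersolution of
`min{−Lv + c v − f, v − φ} = 0` on `ℝⁿ`. -/
def IsViscositySupersolution {n : ℕ} (ν : Measure (En n)) (F : En n → En n → En n)
    (b : En n → En n) (c f φ : En n → ℝ) (v : En n → ℝ) : Prop :=
  Continuous v ∧ (∃ M, ∀ x, |v x| ≤ M) ∧
  ∀ u : En n → ℝ, IsTestFn u → ∀ x₀ : En n,
    (∀ x, v x₀ - u x₀ ≤ v x - u x) → u x₀ = v x₀ →
    0 ≤ min (-(Lop ν F b u x₀) + c x₀ * u x₀ - f x₀) (u x₀ - φ x₀)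


/-- A viscosity solution is both a viscosity subsolution and a viscosity supersolution. -/
def IsViscositySolution {n : ℕ} (ν : Measure (En n)) (F : En n → En n → En n)
    (b : En n → En n) (c f φ : En n → ℝ) (v : En n → ℝ) : Prop :=
  IsViscositySubsolution ν F b c f φ v ∧ IsViscositySupersolution ν F b c f φ v

/-! ### Test functions -/

lemma gradient_of_hasFDerivAt {n : ℕ} {u : En n → ℝ} {p x : En n}
    (h : HasFDerivAt u (innerSL ℝ p) x) : gradient u x = p := by
  have : HasGradientAt u p x := by
    rw [hasGradientAt_iff_hasFDerivAt]
    convert! h using 1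
  exact this.gradient

/-- Radial functions `g(‖x‖²)` whose first two derivatives decay suitably are test functions. -/
lemma isTestFn_radial {n : ℕ} (g g' g'' : ℝ → ℝ)
    (hg : ∀ s, 0 ≤ s → HasDerivAt g (g' s) s) (hg' : ∀ s, 0 ≤ s → HasDerivAt g' (g'' s) s)
    (hC : ContDiff ℝ 2 (fun x : En n => g (‖x‖ ^ 2)))
    (h1 : ∀ r, 0 ≤ r → |g' (r ^ 2)| * r ≤ 1) (h2 : ∀ r, 0 ≤ r → |g' (r ^ 2)| ≤ 1)
    (h3 : ∀ r, 0 ≤ r → |g'' (r ^ 2)| * r ^ 2 ≤ 1) :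
    IsTestFn (fun x : En n => g (‖x‖ ^ 2)) ∧
      ∀ x : En n, HasFDerivAt (fun x : En n => g (‖x‖ ^ 2))
        (innerSL ℝ ((2 * g' (‖x‖ ^ 2)) • x)) x := by
  have hN : ∀ x : En n, HasFDerivAt (fun x : En n => ‖x‖ ^ 2) (2 • innerSL ℝ x) x :=
    fun x => (hasStrictFDerivAt_norm_sq x).hasFDerivAt
  have hD : ∀ x : En n, HasFDerivAt (fun x : En n => g (‖x‖ ^ 2))
      (innerSL ℝ ((2 * g' (‖x‖ ^ 2)) • x)) x := by
    intro x
    have := (hg (‖x‖ ^ 2) (by positivity)).comp_hasFDerivAt x (hN x)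
    convert! this using 1
    ext h
    simp
    ring
  have hf : fderiv ℝ (fun x : En n => g (‖x‖ ^ 2)) =
      fun x => (2 * g' (‖x‖ ^ 2)) • innerSL ℝ x := by
    ext1 x
    rw [(hD x).fderiv, map_smul]
  refine ⟨⟨hC, ⟨2, fun x => ?_⟩, ⟨6, fun x => ?_⟩⟩, hD⟩
  · rw [hf]
    simp only [norm_smul, innerSL_apply_norm, norm_mul, Real.norm_eq_abs, abs_two]
    have := h1 ‖x‖ (norm_nonneg _)
    linarith
  · rw [hf]
    have h5 : HasFDerivAt (fun x : En n => 2 * g' (‖x‖ ^ 2))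
        ((2 : ℝ) • (g'' (‖x‖ ^ 2) • (2 • innerSL ℝ x))) x :=
      ((hg' (‖x‖ ^ 2) (by positivity)).comp_hasFDerivAt x (hN x)).const_mul 2
    have h6 := h5.smul (innerSL ℝ (E := En n)).hasFDerivAt
    have hb := h2 ‖x‖ (norm_nonneg _)
    have hc := h3 ‖x‖ (norm_nonneg _)
    rw [show fderiv ℝ (fun x : En n => (2 * g' (‖x‖ ^ 2)) • innerSL ℝ x) x = _ from h6.fderiv]
    refine ContinuousLinearMap.opNorm_le_bound _ (by norm_num) fun h => ?_
    simp only [_root_.add_apply, _root_.smul_apply,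
      ContinuousLinearMap.smulRight_apply, innerSL_apply_apply]
    refine (norm_add_le _ _).trans ?_
    simp only [norm_smul, norm_mul, Real.norm_eq_abs, abs_two, nsmul_eq_mul,
      smul_eq_mul, Nat.cast_ofNat]
    rw [innerSL_apply_norm (𝕜 := ℝ) h, innerSL_apply_norm (𝕜 := ℝ) x]
    have hi := abs_real_inner_le_norm x h
    have hh := norm_nonneg h
    have hx := norm_nonneg x
    have e1 : |g'' (‖x‖ ^ 2)| * |⟪x, h⟫| * ‖x‖ ≤ ‖h‖ := by
      calc |g'' (‖x‖ ^ 2)| * |⟪x, h⟫| * ‖x‖ ≤ |g'' (‖x‖ ^ 2)| * (‖x‖ * ‖h‖) * ‖x‖ := by gcongr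
        _ = (|g'' (‖x‖ ^ 2)| * ‖x‖ ^ 2) * ‖h‖ := by ring
        _ ≤ 1 * ‖h‖ := by gcongr
        _ = ‖h‖ := one_mul _
    have e2 : |g' (‖x‖ ^ 2)| * ‖h‖ ≤ ‖h‖ := by nlinarith
    nlinarith

/-- The logarithmic penalty `ψ(x) = ½ log(1 + ‖x‖²)`, used both for doubling the variables and
for confining the maximum points. -/
def psi {n : ℕ} (x : En n) : ℝ := 1 / 2 * Real.log (1 + ‖x‖ ^ 2)

/-- The gradient of `psi`. -/
def dpsi {n : ℕ} (x : En n) : En n := (1 / (1 + ‖x‖ ^ 2)) • x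

/-- `θ(x) = √(1 + ‖x‖²)`, a test function that is uniformly convex on bounded sets and of linear
growth. -/
def theta {n : ℕ} (x : En n) : ℝ := Real.sqrt (1 + ‖x‖ ^ 2)

lemma psi_test {n : ℕ} : IsTestFn (psi : En n → ℝ) ∧
    ∀ x : En n, HasFDerivAt psi (innerSL ℝ (dpsi x)) x := by
  have := isTestFn_radial (n := n) (fun s => 1 / 2 * Real.log (1 + s))
    (fun s => 1 / 2 * (1 + s)⁻¹) (fun s => 1 / 2 * (-1 / (1 + s) ^ 2)) ?_ ?_ ?_ ?_ ?_ ?_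
  · refine ⟨this.1, fun x => ?_⟩
    convert! this.2 x using 2
    simp [dpsi]
  · intro s hs
    have h : HasDerivAt (fun s : ℝ => 1 + s) 1 s := by simpa using (hasDerivAt_id s).const_add 1
    have := (h.log (by positivity)).const_mul (1 / 2)
    convert! this using 1
    simp
  · intro s hs
    have h : HasDerivAt (fun s : ℝ => 1 + s) 1 s := by simpa using (hasDerivAt_id s).const_add 1
    exact (h.fun_inv (by positivity)).const_mul (1 / 2)
  · exact contDiff_const.mul
      ((contDiff_const.add (contDiff_norm_sq ℝ)).log fun x => by positivity)
  · intro r hr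
    rw [abs_of_pos (by positivity)]
    field_simp
    nlinarith [sq_nonneg (r - 1)]
  · intro r hr
    rw [abs_of_pos (by positivity)]
    field_simp
    nlinarith
  · intro r hr
    rw [abs_mul, abs_of_pos (by positivity : (0 : ℝ) < 1 / 2), abs_div, abs_neg, abs_one,
      abs_of_pos (by positivity : 0 < (1 + r ^ 2) ^ 2)]
    field_simp
    nlinarith [sq_nonneg (r ^ 2)]

lemma theta_test {n : ℕ} : IsTestFn (theta : En n → ℝ) ∧
    HasFDerivAt (theta : En n → ℝ) (0 : En n →L[ℝ] ℝ) 0 := by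
  have := isTestFn_radial (n := n) (fun s => Real.sqrt (1 + s))
    (fun s => 1 / 2 * (Real.sqrt (1 + s))⁻¹)
    (fun s => 1 / 2 * (-(1 / (2 * Real.sqrt (1 + s))) / (Real.sqrt (1 + s)) ^ 2))
    ?_ ?_ ?_ ?_ ?_ ?_
  · refine ⟨this.1, ?_⟩
    have h := this.2 0
    rw [smul_zero, map_zero] at h
    exact h
  · intro s hs
    have h : HasDerivAt (fun s : ℝ => 1 + s) 1 s := by simpa using (hasDerivAt_id s).const_add 1
    have := (h.sqrt (by positivity))
    convert! this using 1
    field_simp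
  · intro s hs
    have h : HasDerivAt (fun s : ℝ => 1 + s) 1 s := by simpa using (hasDerivAt_id s).const_add 1
    exact ((h.sqrt (by positivity)).fun_inv (by positivity)).const_mul (1 / 2)
  · exact (contDiff_const.add (contDiff_norm_sq ℝ)).sqrt fun x => by positivity
  all_goals
    intro r hr
    have ht := Real.sq_sqrt (by positivity : 0 ≤ 1 + r ^ 2)
    have ht0 : 0 < Real.sqrt (1 + r ^ 2) := by positivity
    have ht1 : 1 ≤ Real.sqrt (1 + r ^ 2) := Real.one_le_sqrt.2 (by nlinarith)
    set t := Real.sqrt (1 + r ^ 2)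
    clear_value t
  · rw [abs_of_pos (by positivity)]
    have : r ≤ t := by nlinarith
    field_simp
    nlinarith
  · rw [abs_of_pos (by positivity)]
    field_simp
    nlinarith
  · rw [abs_mul, abs_of_pos (by positivity : (0 : ℝ) < 1 / 2), abs_div, abs_neg,
      abs_of_pos (by positivity : 0 < t ^ 2), abs_of_pos (by positivity)]
    have : r ^ 2 = t ^ 2 - 1 := by linarith
    rw [this]
    field_simp
    nlinarith [pow_pos ht0 3]

section generic

variable {E G : Type*} [NormedAddCommGroup E] [NormedSpace ℝ E] [NormedAddCommGroup G]
  [NormedSpace ℝ G]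

/-- A function has a bounded derivative. Stated for vector-valued functions so that it applies
both to a test function and to its derivative. -/
def BddDeriv (g : E → G) : Prop := ∃ M, ∀ x, ‖fderiv ℝ g x‖ ≤ M

lemma BddDeriv.add {g k : E → G} (hg : BddDeriv g) (hk : BddDeriv k) (dg : Differentiable ℝ g)
    (dk : Differentiable ℝ k) : BddDeriv (fun x => g x + k x) := by
  obtain ⟨A, hA⟩ := hg
  obtain ⟨B, hB⟩ := hk
  refine ⟨A + B, fun x => ?_⟩
  rw [fderiv_fun_add (dg x) (dk x)]
  exact (norm_add_le _ _).trans (add_le_add (hA x) (hB x))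

lemma BddDeriv.const_smul {g : E → G} (hg : BddDeriv g) (dg : Differentiable ℝ g) (a : ℝ) :
    BddDeriv (fun x => a • g x) := by
  obtain ⟨A, hA⟩ := hg
  refine ⟨|a| * A, fun x => ?_⟩
  rw [fderiv_fun_const_smul (dg x), norm_smul, Real.norm_eq_abs]
  gcongr
  exact hA x

lemma BddDeriv.comp_sub {g : E → G} (hg : BddDeriv g) (a : E) :
    BddDeriv (fun x => g (x - a)) := by
  obtain ⟨A, hA⟩ := hg
  refine ⟨A, fun x => ?_⟩
  rw [fderiv_comp_sub]
  exact hA _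

lemma bddDeriv_const (a : G) : BddDeriv (fun _ : E => a) := ⟨0, fun x => by simp⟩

lemma bddDeriv_of_hasCompactSupport {g : E → G} (hg : ContDiff ℝ 1 g)
    (hs : HasCompactSupport g) : BddDeriv g :=
  (hs.fderiv (𝕜 := ℝ)).exists_bound_of_continuous (hg.continuous_fderiv (by norm_num))

lemma BddDeriv.lipschitz {g : E → G} (hg : BddDeriv g) (dg : Differentiable ℝ g) :
    ∃ B, 0 ≤ B ∧ ∀ x y, ‖g y - g x‖ ≤ B * ‖y - x‖ := by
  obtain ⟨B, hB⟩ := hg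
  exact ⟨B, (norm_nonneg _).trans (hB 0), fun x y =>
    convex_univ.norm_image_sub_le_of_norm_fderiv_le (fun z _ => dg z) (fun z _ => hB z)
      trivial trivial⟩

end generic

lemma IsTestFn.differentiable {n : ℕ} {u : En n → ℝ} (hu : IsTestFn u) : Differentiable ℝ u :=
  hu.1.differentiable (by norm_num)

lemma IsTestFn.differentiable_fderiv {n : ℕ} {u : En n → ℝ} (hu : IsTestFn u) :
    Differentiable ℝ (fderiv ℝ u) :=
  (hu.1.fderiv_right (m := 1) (by norm_num)).differentiable (by norm_num)

lemma IsTestFn.add {n : ℕ} {u w : En n → ℝ} (hu : IsTestFn u) (hw : IsTestFn w) :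
    IsTestFn (fun x => u x + w x) := by
  have h1 : fderiv ℝ (fun x => u x + w x) = fun x => fderiv ℝ u x + fderiv ℝ w x := by
    ext1 x
    exact fderiv_fun_add (hu.differentiable x) (hw.differentiable x)
  refine ⟨hu.1.add hw.1, BddDeriv.add hu.2.1 hw.2.1 hu.differentiable hw.differentiable, ?_⟩
  rw [h1]
  exact BddDeriv.add hu.2.2 hw.2.2 hu.differentiable_fderiv hw.differentiable_fderiv

lemma IsTestFn.const_mul {n : ℕ} {u : En n → ℝ} (hu : IsTestFn u) (a : ℝ) :
    IsTestFn (fun x => a * u x) := by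
  have h1 : fderiv ℝ (fun x => a * u x) = fun x => a • fderiv ℝ u x := by
    ext1 x
    exact fderiv_const_mul (hu.differentiable x) a
  refine ⟨contDiff_const.mul hu.1, BddDeriv.const_smul hu.2.1 hu.differentiable a, ?_⟩
  rw [h1]
  exact BddDeriv.const_smul hu.2.2 hu.differentiable_fderiv a

lemma IsTestFn.neg {n : ℕ} {u : En n → ℝ} (hu : IsTestFn u) : IsTestFn (fun x => - u x) := by
  simpa using hu.const_mul (-1)

lemma IsTestFn.comp_sub {n : ℕ} {u : En n → ℝ} (hu : IsTestFn u) (a : En n) :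
    IsTestFn (fun x => u (x - a)) := by
  have h1 : fderiv ℝ (fun x => u (x - a)) = fun x => fderiv ℝ u (x - a) := by
    ext1 x
    exact fderiv_comp_sub ..
  refine ⟨hu.1.comp (contDiff_id.sub contDiff_const), BddDeriv.comp_sub hu.2.1 a, ?_⟩
  rw [h1]
  exact BddDeriv.comp_sub hu.2.2 a

lemma isTestFn_const {n : ℕ} (a : ℝ) : IsTestFn (fun _ : En n => a) := by
  have h : fderiv ℝ (fun _ : En n => a) = fun _ => 0 := by ext1 x; simp
  refine ⟨contDiff_const, bddDeriv_const a, ?_⟩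
  rw [h]
  exact bddDeriv_const _

lemma isTestFn_of_hasCompactSupport {n : ℕ} {u : En n → ℝ} (hu : ContDiff ℝ 2 u)
    (hs : HasCompactSupport u) : IsTestFn u :=
  ⟨hu, bddDeriv_of_hasCompactSupport (hu.of_le (by norm_num)) hs,
    bddDeriv_of_hasCompactSupport (hu.fderiv_right (by norm_num)) (hs.fderiv (𝕜 := ℝ))⟩


/-! ### Pointwise estimates -/

/-- The gauge `min(‖h‖², ‖h‖)`: it controls the integrand of `Lu` for every test function `u`. -/
def jumpGauge {n : ℕ} (h : En n) : ℝ := min (‖h‖ ^ 2) ‖h‖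

lemma jumpGauge_nonneg {n : ℕ} (h : En n) : 0 ≤ jumpGauge h :=
  le_min (by positivity) (norm_nonneg _)

lemma continuous_jumpGauge {n : ℕ} : Continuous (jumpGauge : En n → ℝ) := by
  unfold jumpGauge
  fun_prop

lemma IsTestFn.taylor {n : ℕ} {u : En n → ℝ} (hu : IsTestFn u) :
    ∃ C, 0 ≤ C ∧ ∀ x h : En n, |u (x + h) - u x - fderiv ℝ u x h| ≤ C * jumpGauge h := by
  obtain ⟨A, hA⟩ := hu.2.1
  obtain ⟨B, hB0, hL⟩ := BddDeriv.lipschitz hu.2.2 hu.differentiable_fderiv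
  have hA0 : 0 ≤ A := (norm_nonneg _).trans (hA 0)
  refine ⟨max (2 * A) B, le_max_of_le_right hB0, fun x h => ?_⟩
  have key : ∀ C, (∀ z ∈ Metric.closedBall x ‖h‖, ‖fderiv ℝ u z - fderiv ℝ u x‖ ≤ C) →
      |u (x + h) - u x - fderiv ℝ u x h| ≤ C * ‖h‖ := by
    intro C hC
    have := (convex_closedBall x ‖h‖).norm_image_sub_le_of_norm_fderiv_le' (𝕜 := ℝ)
      (fun z _ => hu.differentiable z) hC (x := x) (y := x + h) (by simp) (by simp)
    simpa using this
  have k1 := key (2 * A) fun z _ => (norm_sub_le _ _).trans (by linarith [hA z, hA x])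
  have k2 := key (B * ‖h‖) fun z hz => (hL x z).trans (by
    rw [mem_closedBall_iff_norm] at hz
    gcongr)
  have hh := norm_nonneg h
  unfold jumpGauge
  rcases le_total (‖h‖ ^ 2) ‖h‖ with hm | hm
  · rw [min_eq_left hm]
    calc _ ≤ _ := k2
      _ = B * ‖h‖ ^ 2 := by ring
      _ ≤ _ := by gcongr; exact le_max_right _ _
  · rw [min_eq_right hm]
    calc _ ≤ _ := k1
      _ ≤ _ := by gcongr; exact le_max_left _ _

lemma jumpGauge_le_theta {n : ℕ} (h : En n) : jumpGauge h ≤ 3 * (theta h - theta (0 : En n)) := by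
  have h0 : theta (0 : En n) = 1 := by simp [theta]
  rw [h0]
  unfold jumpGauge theta
  have hr := norm_nonneg h
  set r := ‖h‖
  have ht := Real.sq_sqrt (by positivity : 0 ≤ 1 + r ^ 2)
  have ht1 : 1 ≤ Real.sqrt (1 + r ^ 2) := Real.one_le_sqrt.2 (by nlinarith)
  set t := Real.sqrt (1 + r ^ 2)
  clear_value t r
  rcases le_total r 1 with h1 | h1
  · refine (min_le_left _ _).trans ?_
    have : t ≤ 2 := by nlinarith
    nlinarith
  · refine (min_le_right _ _).trans ?_
    by_contra hcon
    push Not at hcon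
    nlinarith

/-- The gauge changes in a controlled way, so integrability of the gauge of `F x` does not depend
on `x`. -/
lemma jumpGauge_le {n : ℕ} (a b : En n) : jumpGauge a ≤ 2 * jumpGauge b + 2 * ‖a - b‖ ^ 2 := by
  have htri : ‖a‖ ≤ ‖b‖ + ‖a - b‖ := by
    have := norm_add_le b (a - b)
    simpa using this
  have ha := norm_nonneg a
  have hb := norm_nonneg b
  have hk := norm_nonneg (a - b)
  unfold jumpGauge
  set k := ‖a - b‖
  set α := ‖a‖
  set β := ‖b‖
  clear_value k α β
  rcases le_total β 1 with h1 | h1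
  · rw [min_eq_left (by nlinarith : β ^ 2 ≤ β)]
    refine (min_le_left _ _).trans ?_
    nlinarith [sq_nonneg (β - k)]
  · rw [min_eq_right (by nlinarith : β ≤ β ^ 2)]
    refine (min_le_right _ _).trans ?_
    nlinarith [sq_nonneg (k - 1)]

lemma psi_nonneg {n : ℕ} (x : En n) : 0 ≤ psi x := by
  unfold psi
  have : 0 ≤ Real.log (1 + ‖x‖ ^ 2) := Real.log_nonneg (by nlinarith [norm_nonneg x])
  positivity

lemma psi_zero {n : ℕ} : psi (0 : En n) = 0 := by simp [psi]

lemma continuous_psi {n : ℕ} : Continuous (psi : En n → ℝ) := psi_test.1.1.continuous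

lemma psi_sub_comm {n : ℕ} (x y : En n) : psi (x - y) = psi (y - x) := by
  simp [psi, norm_sub_rev]

lemma norm_dpsi_le {n : ℕ} (x : En n) : ‖dpsi x‖ ≤ ‖x‖ := by
  unfold dpsi
  rw [norm_smul, Real.norm_of_nonneg (by positivity)]
  have : 1 / (1 + ‖x‖ ^ 2) ≤ 1 := by
    rw [div_le_one (by positivity)]
    nlinarith [norm_nonneg x]
  nlinarith [norm_nonneg x]

lemma norm_dpsi_le_one {n : ℕ} (x : En n) : ‖dpsi x‖ ≤ 1 := by
  unfold dpsi
  rw [norm_smul, Real.norm_of_nonneg (by positivity), one_div_mul_eq_div,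
    div_le_one (by positivity)]
  nlinarith [sq_nonneg (‖x‖ - 1)]

lemma dpsi_sub_comm {n : ℕ} (x y : En n) : dpsi (y - x) = - dpsi (x - y) := by
  unfold dpsi
  rw [norm_sub_rev y x, ← smul_neg, neg_sub]

lemma psi_lip {n : ℕ} (x h : En n) : psi (x + h) ≤ psi x + ‖h‖ := by
  have := convex_univ.norm_image_sub_le_of_norm_hasFDerivWithin_le (𝕜 := ℝ) (f := psi)
    (f' := fun z : En n => innerSL ℝ (dpsi z)) (C := 1)
    (fun z _ => (psi_test.2 z).hasFDerivWithinAt)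
    (fun z _ => by rw [innerSL_apply_norm (𝕜 := ℝ)]; exact norm_dpsi_le_one z)
    (Set.mem_univ x) (Set.mem_univ (x + h))
  rw [add_sub_cancel_left, Real.norm_eq_abs] at this
  linarith [le_abs_self (psi (x + h) - psi x)]

/-- Concavity of the logarithm gives a one-sided second-order bound for `psi` which is global in
`h` and decays like `‖x‖⁻²`. -/
lemma psi_step {n : ℕ} (x h : En n) :
    psi (x + h) - psi x - ⟪dpsi x, h⟫ ≤ ‖h‖ ^ 2 / (2 * (1 + ‖x‖ ^ 2)) := by
  have hS : 0 < 1 + ‖x‖ ^ 2 := by positivity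
  have hS' : 0 < 1 + ‖x + h‖ ^ 2 := by positivity
  have e : ‖x + h‖ ^ 2 = ‖x‖ ^ 2 + 2 * ⟪x, h⟫ + ‖h‖ ^ 2 := norm_add_sq_real x h
  have hl := Real.log_le_sub_one_of_pos (div_pos hS' hS)
  rw [Real.log_div hS'.ne' hS.ne'] at hl
  have hi : ⟪dpsi x, h⟫ = ⟪x, h⟫ / (1 + ‖x‖ ^ 2) := by
    unfold dpsi
    rw [real_inner_smul_left, one_div_mul_eq_div]
  rw [hi]
  unfold psi
  have : (1 + ‖x + h‖ ^ 2) / (1 + ‖x‖ ^ 2) - 1 =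
      2 * (⟪x, h⟫ / (1 + ‖x‖ ^ 2) + ‖h‖ ^ 2 / (2 * (1 + ‖x‖ ^ 2))) := by
    rw [e]
    field_simp
    ring
  linarith

/-- The increment of `psi` along the jump `h = F(x,y)`, compared with the jump `h₀ = F(0,y)`. -/
lemma psi_step_compare {n : ℕ} (x h h₀ : En n) :
    psi (x + h) - psi x - ⟪dpsi x, h⟫ ≤ ‖h - h₀‖ ^ 2 / (1 + ‖x‖ ^ 2) + 2 * jumpGauge h₀ := by
  have hS : 1 ≤ 1 + ‖x‖ ^ 2 := by nlinarith [norm_nonneg x]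
  have htri : ‖h‖ ≤ ‖h₀‖ + ‖h - h₀‖ := by
    have := norm_add_le h₀ (h - h₀)
    simpa using this
  unfold jumpGauge
  rcases le_total ‖h₀‖ 1 with h1 | h1
  · rw [min_eq_left (by nlinarith [norm_nonneg h₀])]
    refine (psi_step x h).trans ?_
    have : ‖h‖ ^ 2 ≤ 2 * ‖h - h₀‖ ^ 2 + 2 * ‖h₀‖ ^ 2 := by
      nlinarith [sq_nonneg (‖h₀‖ - ‖h - h₀‖), norm_nonneg h]
    have e2 : ‖h₀‖ ^ 2 / (1 + ‖x‖ ^ 2) ≤ ‖h₀‖ ^ 2 := div_le_self (by positivity) hS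
    have e1 : ‖h‖ ^ 2 / (2 * (1 + ‖x‖ ^ 2)) ≤
        ‖h - h₀‖ ^ 2 / (1 + ‖x‖ ^ 2) + ‖h₀‖ ^ 2 / (1 + ‖x‖ ^ 2) := by
      rw [← add_div, div_le_div_iff₀ (by positivity) (by positivity)]
      nlinarith
    nlinarith [sq_nonneg ‖h₀‖]
  · rw [min_eq_right (by nlinarith [norm_nonneg h₀])]
    have e1 := psi_step x (h - h₀)
    have e2 := psi_lip (x + (h - h₀)) h₀
    rw [show x + (h - h₀) + h₀ = x + h by abel] at e2
    rw [inner_sub_right] at e1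
    have e3 : -⟪dpsi x, h₀⟫ ≤ ‖h₀‖ := by
      have := (abs_le.1 (abs_real_inner_le_norm (dpsi x) h₀)).1
      nlinarith [norm_dpsi_le_one x, norm_nonneg h₀]
    have e4 : ‖h - h₀‖ ^ 2 / (2 * (1 + ‖x‖ ^ 2)) ≤ ‖h - h₀‖ ^ 2 / (1 + ‖x‖ ^ 2) := by
      gcongr
      linarith
    linarith

lemma norm_sq_le_psi {n : ℕ} (x : En n) : ‖x‖ ^ 2 / (1 + ‖x‖ ^ 2) ≤ 2 * psi x := by
  have hS : 0 < 1 + ‖x‖ ^ 2 := by positivity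
  have := Real.one_sub_inv_le_log_of_pos hS
  have e : 1 - (1 + ‖x‖ ^ 2)⁻¹ = ‖x‖ ^ 2 / (1 + ‖x‖ ^ 2) := by
    field_simp
    ring
  unfold psi
  linarith

lemma norm_le_of_psi_le {n : ℕ} {x : En n} {R : ℝ} (h : psi x ≤ R) :
    ‖x‖ ≤ Real.exp (2 * R) := by
  have hS : 0 < 1 + ‖x‖ ^ 2 := by positivity
  unfold psi at h
  have h2 : 1 + ‖x‖ ^ 2 ≤ Real.exp (2 * R) := by
    rw [← Real.log_le_iff_le_exp hS]
    linarith
  nlinarith [sq_nonneg (‖x‖ - 1)]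

/-! ### Approximation of touching functions -/

/-- A test function lying above a continuous `v` can be lowered, through test functions, to `v`
pointwise while staying above `v`. -/
lemma exists_approx {n : ℕ} {v ϕ : En n → ℝ} (hv : Continuous v) (hϕ : IsTestFn ϕ)
    (hle : ∀ x, v x ≤ ϕ x) :
    ∃ u : ℕ → En n → ℝ, (∀ k, IsTestFn (u k)) ∧ (∀ k x, v x ≤ u k x ∧ u k x ≤ ϕ x) ∧
      ∀ x, Filter.Tendsto (fun k => u k x) Filter.atTop (nhds (v x)) := by
  set G : En n → ℝ := fun x => ϕ x - v x with hG
  have hGc : Continuous G := hϕ.1.continuous.sub hv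
  have hG0 : ∀ x, 0 ≤ G x := fun x => sub_nonneg.2 (hle x)
  -- A smooth function squeezed between `max(0, G - ε)` and `G`.
  have hs : ∀ ε : ℝ, 0 < ε → ∃ s : En n → ℝ, ContDiff ℝ 2 s ∧
      ∀ x, 0 ≤ s x ∧ G x - ε ≤ s x ∧ s x ≤ G x := by
    intro ε hε
    obtain ⟨s, hs⟩ := exists_contMDiffMap_forall_mem_convex_of_local_const
      (n := 2) (modelWithCornersSelf ℝ (En n)) (t := fun x => Set.Icc (max 0 (G x - ε)) (G x))
      (fun x => convex_Icc _ _) (fun x => ⟨max 0 (G x - ε / 2), by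
        have hc : ∀ᶠ y in nhds x, |G y - G x| < ε / 2 := by
          have := hGc.continuousAt.eventually (Metric.ball_mem_nhds (G x) (half_pos hε))
          simpa [Real.dist_eq] using this
        filter_upwards [hc] with y hy
        rw [abs_lt] at hy
        refine ⟨max_le_max le_rfl (by linarith), max_le (hG0 y) (by linarith)⟩⟩)
    refine ⟨s, s.contMDiff.contDiff, fun x => ?_⟩
    obtain ⟨h1, h2⟩ := hs x
    exact ⟨(le_max_left _ _).trans h1, (le_max_right _ _).trans h1, h2⟩
  choose s hsC hsB using fun k : ℕ => hs (1 / ((k : ℝ) + 1)) (by positivity)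
  let χ : ∀ k : ℕ, ContDiffBump (0 : En n) := fun k =>
    ⟨(k : ℝ) + 1, (k : ℝ) + 2, by positivity, by linarith⟩
  refine ⟨fun k x => ϕ x + - (χ k x * s k x), fun k => ?_, fun k x => ?_, fun x => ?_⟩
  · refine hϕ.add (IsTestFn.neg (isTestFn_of_hasCompactSupport ((χ k).contDiff.mul (hsC k)) ?_))
    exact (χ k).hasCompactSupport.mul_right
  · obtain ⟨a, b, c⟩ := hsB k x
    have h0 : 0 ≤ χ k x := (χ k).nonneg
    have h1 : χ k x ≤ 1 := (χ k).le_one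
    simp only [hG] at c
    constructor
    · nlinarith
    · nlinarith
  · have hev : ∀ᶠ k : ℕ in Filter.atTop, χ k x = 1 := by
      filter_upwards [Filter.eventually_ge_atTop ⌈‖x‖⌉₊] with k hk
      refine (χ k).one_of_mem_closedBall ?_
      rw [mem_closedBall_zero_iff]
      have := Nat.ceil_le.1 hk
      change ‖x‖ ≤ (k : ℝ) + 1
      linarith
    have hlim : Filter.Tendsto (fun k : ℕ => v x + 1 / ((k : ℝ) + 1)) Filter.atTop
        (nhds (v x)) := by
      simpa using (tendsto_one_div_add_atTop_nhds_zero_nat (𝕜 := ℝ)).const_add (v x)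
    refine tendsto_of_tendsto_of_tendsto_of_le_of_le' tendsto_const_nhds hlim ?_ ?_
    · filter_upwards [hev] with k hk
      have := (hsB k x).2.2
      simp only [hG] at this
      rw [hk]
      linarith
    · filter_upwards [hev] with k hk
      have := (hsB k x).2.1
      simp only [hG] at this
      rw [hk]
      linarith

lemma hasFDerivAt_of_touch {n : ℕ} {u ϕ : En n → ℝ} {x p : En n} (hu : IsTestFn u)
    (hle : ∀ y, u y ≤ ϕ y) (hx : u x = ϕ x) (hϕ : HasFDerivAt ϕ (innerSL ℝ p) x) :
    HasFDerivAt u (innerSL ℝ p) x := by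
  have hd := (hu.differentiable x).hasFDerivAt
  have hmin : IsLocalMin (fun y => ϕ y - u y) x := by
    refine Filter.Eventually.of_forall fun y => ?_
    simp only [hx, sub_self]
    linarith [hle y]
  have h0 := hmin.hasFDerivAt_eq_zero (hϕ.sub hd)
  rw [sub_eq_zero] at h0
  rw [h0]
  exact hd


/-! ### The nonlocal term -/

lemma Lop_neg {n : ℕ} (ν : Measure (En n)) (F : En n → En n → En n) (b : En n → En n)
    (u : En n → ℝ) (x : En n) : Lop ν F b (fun y => - u y) x = - Lop ν F b u x := by
  have hg : gradient (fun y => - u y) x = - gradient u x := by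
    unfold gradient
    rw [fderiv_fun_neg, map_neg]
  unfold Lop
  rw [hg, inner_neg_right, neg_add, ← integral_neg]
  congr 2
  ext y
  rw [inner_neg_left]
  ring

section jumps

variable {n : ℕ} {μ : Measure (En n)} {F : En n → En n → En n} {K : ℝ}

lemma integrable_jump_sq (hK : 0 ≤ K) (hF : ∀ x, Measurable (F x))
    (hL : ∀ x₁ x₂ : En n, ∫⁻ y, ENNReal.ofReal (‖F x₁ y - F x₂ y‖ ^ 2) ∂μ
      ≤ ENNReal.ofReal (K * ‖x₁ - x₂‖ ^ 2)) (x₁ x₂ : En n) :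
    Integrable (fun y => ‖F x₁ y - F x₂ y‖ ^ 2) μ ∧
      ∫ y, ‖F x₁ y - F x₂ y‖ ^ 2 ∂μ ≤ K * ‖x₁ - x₂‖ ^ 2 := by
  have hm : AEStronglyMeasurable (fun y => ‖F x₁ y - F x₂ y‖ ^ 2) μ :=
    (((hF x₁).sub (hF x₂)).norm.pow_const 2).aestronglyMeasurable
  have h0 : 0 ≤ᵐ[μ] fun y => ‖F x₁ y - F x₂ y‖ ^ 2 :=
    Filter.Eventually.of_forall fun y => by positivity
  constructor
  · refine ⟨hm, ?_⟩
    rw [hasFiniteIntegral_iff_ofReal h0]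
    exact (hL x₁ x₂).trans_lt ENNReal.ofReal_lt_top
  · rw [integral_eq_lintegral_of_nonneg_ae h0 hm]
    exact ENNReal.toReal_le_of_le_ofReal (by positivity) (hL x₁ x₂)

lemma integrable_jumpGauge (hK : 0 ≤ K) (hF : ∀ x, Measurable (F x))
    (hL : ∀ x₁ x₂ : En n, ∫⁻ y, ENNReal.ofReal (‖F x₁ y - F x₂ y‖ ^ 2) ∂μ
      ≤ ENNReal.ofReal (K * ‖x₁ - x₂‖ ^ 2)) {x₀ : En n}
    (h : Integrable (fun y => jumpGauge (F x₀ y)) μ) (x : En n) :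
    Integrable (fun y => jumpGauge (F x y)) μ := by
  refine ((h.const_mul 2).add ((integrable_jump_sq hK hF hL x x₀).1.const_mul 2)).mono'
    (continuous_jumpGauge.measurable.comp (hF x)).aestronglyMeasurable
    (Filter.Eventually.of_forall fun y => ?_)
  rw [Real.norm_of_nonneg (jumpGauge_nonneg _)]
  exact jumpGauge_le _ _

lemma integrable_increment (hF : ∀ x, Measurable (F x)) {u : En n → ℝ} {x p : En n}
    (hu : IsTestFn u) (hp : HasFDerivAt u (innerSL ℝ p) x)
    (h : Integrable (fun y => jumpGauge (F x y)) μ) :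
    Integrable (fun y => u (x + F x y) - u x - ⟪p, F x y⟫) μ := by
  obtain ⟨C, -, hC⟩ := hu.taylor
  refine (h.const_mul C).mono' ?_ (Filter.Eventually.of_forall fun y => ?_)
  · have h1 : Measurable fun y => u (x + F x y) :=
      hu.1.continuous.measurable.comp ((hF x).const_add x)
    have h2 : Measurable fun y => ⟪p, F x y⟫ :=
      ((innerSL ℝ p).continuous.measurable).comp (hF x)
    exact ((h1.sub_const _).sub h2).aestronglyMeasurable
  · have := hC x (F x y)
    rw [hp.fderiv] at this
    exact this

/-- If the gauge of the jumps is not integrable, every test function can be raised away from `x`,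
keeping its value and gradient at `x`, so that the integrand in the nonlocal operator is not
integrable and the (junk) value of the integral is `0`. -/
lemma exists_not_integrable (hF : ∀ x, Measurable (F x)) {ϕ : En n → ℝ} {x p : En n}
    (hϕ : IsTestFn ϕ) (hp : HasFDerivAt ϕ (innerSL ℝ p) x)
    (h : ¬ Integrable (fun y => jumpGauge (F x y)) μ) :
    ∃ u : En n → ℝ, IsTestFn u ∧ (∀ y, ϕ y ≤ u y) ∧ u x = ϕ x ∧
      HasFDerivAt u (innerSL ℝ p) x ∧
      ¬ Integrable (fun y => u (x + F x y) - u x - ⟪p, F x y⟫) μ := by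
  obtain ⟨C, hC0, hC⟩ := hϕ.taylor
  set A : ℝ := 3 * (C + 1) with hA
  have hth : HasFDerivAt (fun y => theta (y - x)) (0 : En n →L[ℝ] ℝ) x := by
    have h0 : HasFDerivAt (theta : En n → ℝ) (0 : En n →L[ℝ] ℝ) (x - x) := by
      rw [sub_self]
      exact theta_test.2
    have := HasFDerivAt.comp (f := fun y : En n => y - x) (g := theta) x h0
      ((hasFDerivAt_id x).sub_const x)
    rwa [ContinuousLinearMap.zero_comp] at this
  have hge : ∀ y : En n, 0 ≤ theta (y - x) - theta (0 : En n) := fun y => by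
    have := jumpGauge_le_theta (y - x)
    linarith [jumpGauge_nonneg (y - x)]
  have hud : HasFDerivAt (fun y => ϕ y + (A * theta (y - x) + - (A * theta (0 : En n))))
      (innerSL ℝ p) x := by
    have := hp.add ((hth.const_mul A).add_const (-(A * theta (0 : En n))))
    rwa [smul_zero, add_zero] at this
  refine ⟨fun y => ϕ y + (A * theta (y - x) + - (A * theta (0 : En n))),
    hϕ.add (((theta_test.1.comp_sub x).const_mul A).add (isTestFn_const _)), fun y => ?_, ?_,
    hud, fun hi => h ?_⟩
  · have := mul_nonneg (by positivity : 0 ≤ A) (hge y)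
    linarith
  · simp
  · refine hi.mono' (continuous_jumpGauge.measurable.comp (hF x)).aestronglyMeasurable
      (Filter.Eventually.of_forall fun y => ?_)
    rw [Real.norm_of_nonneg (jumpGauge_nonneg _)]
    have h1 := (abs_le.1 (hC x (F x y))).1
    rw [hp.fderiv, innerSL_apply_apply] at h1
    have h2 := jumpGauge_le_theta (F x y)
    have h3 : (C + 1) * jumpGauge (F x y) ≤
        (C + 1) * (3 * (theta (F x y) - theta (0 : En n))) := by gcongr
    simp only [add_sub_cancel_left, sub_self, hA]
    linarith

end jumps

/-- Passage from test functions to the touched functions themselves. If `Λ` is a lower bound for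
`Lu(x₀) + Lw(y₀)` over all test functions `u, w` touching `w₁, w₂` from above at `x₀, y₀`,
then `Λ` is bounded by the drift terms plus any bound for the integral of a majorant `H` of the
joint increment of `w₁` and `w₂`. When the gauge of the jumps is not
integrable, the nonlocal terms disappear altogether. -/
lemma nonlocal_le {n : ℕ} {ν : Measure (En n)} {F : En n → En n → En n} {b : En n → En n}
    {K : ℝ} (hK : 0 ≤ K) (hF : ∀ x, Measurable (F x))
    (hL : ∀ x₁ x₂ : En n, ∫⁻ y in {(0 : En n)}ᶜ, ENNReal.ofReal (‖F x₁ y - F x₂ y‖ ^ 2) ∂ν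
      ≤ ENNReal.ofReal (K * ‖x₁ - x₂‖ ^ 2))
    {w₁ w₂ ϕ χ H : En n → ℝ} {x₀ y₀ p q : En n} {B Λ : ℝ}
    (hw₁ : Continuous w₁) (hw₂ : Continuous w₂) (hϕ : IsTestFn ϕ) (hχ : IsTestFn χ)
    (hϕw : ∀ x, w₁ x ≤ ϕ x) (hχw : ∀ x, w₂ x ≤ χ x) (hϕ₀ : ϕ x₀ = w₁ x₀) (hχ₀ : χ y₀ = w₂ y₀)
    (hp : HasFDerivAt ϕ (innerSL ℝ p) x₀) (hq : HasFDerivAt χ (innerSL ℝ q) y₀)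
    (hB : 0 ≤ B)
    (hHint : Integrable (fun y => jumpGauge (F 0 y)) (ν.restrict {(0 : En n)}ᶜ) →
      Integrable H (ν.restrict {(0 : En n)}ᶜ) ∧ ∫ y in {(0 : En n)}ᶜ, H y ∂ν ≤ B)
    (hH : ∀ y, w₁ (x₀ + F x₀ y) - w₁ x₀ - ⟪p, F x₀ y⟫ +
      (w₂ (y₀ + F y₀ y) - w₂ y₀ - ⟪q, F y₀ y⟫) ≤ H y)
    (hΛ : ∀ u w : En n → ℝ, IsTestFn u → IsTestFn w → (∀ x, w₁ x ≤ u x) → (∀ x, w₂ x ≤ w x) →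
      u x₀ = w₁ x₀ → w y₀ = w₂ y₀ → Λ ≤ Lop ν F b u x₀ + Lop ν F b w y₀) :
    Λ ≤ ⟪b x₀, p⟫ + ⟪b y₀, q⟫ + B := by
  by_cases hA : Integrable (fun y => jumpGauge (F 0 y)) (ν.restrict {(0 : En n)}ᶜ)
  · obtain ⟨hHi, hHB⟩ := hHint hA
    have hgx := integrable_jumpGauge hK hF hL hA x₀
    have hgy := integrable_jumpGauge hK hF hL hA y₀
    obtain ⟨u, hut, hub, hul⟩ := exists_approx hw₁ hϕ hϕw
    obtain ⟨w, hwt, hwb, hwl⟩ := exists_approx hw₂ hχ hχw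
    have hu₀ : ∀ k, u k x₀ = w₁ x₀ := fun k =>
      le_antisymm ((hub k x₀).2.trans hϕ₀.le) (hub k x₀).1
    have hw₀ : ∀ k, w k y₀ = w₂ y₀ := fun k =>
      le_antisymm ((hwb k y₀).2.trans hχ₀.le) (hwb k y₀).1
    have hup : ∀ k, HasFDerivAt (u k) (innerSL ℝ p) x₀ := fun k =>
      hasFDerivAt_of_touch (hut k) (fun y => (hub k y).2) ((hu₀ k).trans hϕ₀.symm) hp
    have hwq : ∀ k, HasFDerivAt (w k) (innerSL ℝ q) y₀ := fun k =>
      hasFDerivAt_of_touch (hwt k) (fun y => (hwb k y).2) ((hw₀ k).trans hχ₀.symm) hq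
    have iu := fun k => integrable_increment hF (hut k) (hup k) hgx
    have iw := fun k => integrable_increment hF (hwt k) (hwq k) hgy
    have iϕ := integrable_increment hF hϕ hp hgx
    have iχ := integrable_increment hF hχ hq hgy
    let g : ℕ → En n → ℝ := fun k y => (u k (x₀ + F x₀ y) - u k x₀ - ⟪p, F x₀ y⟫) +
      (w k (y₀ + F y₀ y) - w k y₀ - ⟪q, F y₀ y⟫)
    let D : En n → ℝ := fun y => (ϕ (x₀ + F x₀ y) - ϕ x₀ - ⟪p, F x₀ y⟫) +
      (χ (y₀ + F y₀ y) - χ y₀ - ⟪q, F y₀ y⟫)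
    have ig : ∀ k, Integrable (g k) (ν.restrict {(0 : En n)}ᶜ) := fun k => (iu k).add (iw k)
    have iD : Integrable D (ν.restrict {(0 : En n)}ᶜ) := iϕ.add iχ
    have hgD : ∀ k y, g k y ≤ D y := by
      intro k y
      simp only [g, D, hu₀, hw₀, hϕ₀, hχ₀]
      linarith [(hub k (x₀ + F x₀ y)).2, (hwb k (y₀ + F y₀ y)).2]
    have hbound : ∀ k, Λ ≤ ⟪b x₀, p⟫ + ⟪b y₀, q⟫ +
        ∫ y in {(0 : En n)}ᶜ, max (g k y) (H y) ∂ν := by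
      intro k
      have h1 := hΛ (u k) (w k) (hut k) (hwt k) (fun x => (hub k x).1) (fun x => (hwb k x).1)
        (hu₀ k) (hw₀ k)
      unfold Lop at h1
      rw [gradient_of_hasFDerivAt (hup k), gradient_of_hasFDerivAt (hwq k)] at h1
      have h2 : ∫ y in {(0 : En n)}ᶜ, g k y ∂ν = _ := integral_add (iu k) (iw k)
      have h3 : ∫ y in {(0 : En n)}ᶜ, g k y ∂ν ≤
          ∫ y in {(0 : En n)}ᶜ, max (g k y) (H y) ∂ν :=
        integral_mono (ig k) ((ig k).sup hHi) fun y => le_max_left _ _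
      linarith
    -- Truncating from below by the majorant `H` turns reverse Fatou into dominated convergence.
    have hlim : Filter.Tendsto (fun k => ∫ y in {(0 : En n)}ᶜ, max (g k y) (H y) ∂ν)
        Filter.atTop (nhds (∫ y in {(0 : En n)}ᶜ, H y ∂ν)) := by
      refine tendsto_integral_of_dominated_convergence (fun y => |D y| + |H y|)
        (fun k => ((ig k).sup hHi).aestronglyMeasurable) (iD.abs.add hHi.abs) (fun k => ?_) ?_
      · refine Filter.Eventually.of_forall fun y => ?_
        rw [Real.norm_eq_abs, abs_le]
        constructor
        · linarith [le_max_right (g k y) (H y), neg_abs_le (H y), abs_nonneg (D y)]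
        · refine max_le ?_ ?_
          · linarith [hgD k y, le_abs_self (D y), abs_nonneg (H y)]
          · linarith [le_abs_self (H y), abs_nonneg (D y)]
      · refine Filter.Eventually.of_forall fun y => ?_
        have hg : Filter.Tendsto (fun k => g k y) Filter.atTop
            (nhds (w₁ (x₀ + F x₀ y) - w₁ x₀ - ⟪p, F x₀ y⟫ +
              (w₂ (y₀ + F y₀ y) - w₂ y₀ - ⟪q, F y₀ y⟫))) :=
          (((hul _).sub (hul _)).sub_const _).add (((hwl _).sub (hwl _)).sub_const _)
        have := hg.max (tendsto_const_nhds (x := H y))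
        rwa [max_eq_right (hH y)] at this
    have := ge_of_tendsto' (hlim.const_add (⟪b x₀, p⟫ + ⟪b y₀, q⟫)) hbound
    linarith
  · obtain ⟨u, hu, hϕu, hu₀, hup, hui⟩ := exists_not_integrable hF hϕ hp
      (fun h => hA (integrable_jumpGauge hK hF hL h 0))
    obtain ⟨w, hw, hχw', hw₀, hwq, hwi⟩ := exists_not_integrable hF hχ hq
      (fun h => hA (integrable_jumpGauge hK hF hL h 0))
    have h1 := hΛ u w hu hw (fun x => (hϕw x).trans (hϕu x)) (fun x => (hχw x).trans (hχw' x))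
      (hu₀.trans hϕ₀) (hw₀.trans hχ₀)
    unfold Lop at h1
    rw [gradient_of_hasFDerivAt hup, gradient_of_hasFDerivAt hwq, integral_undef hui,
      integral_undef hwi] at h1
    linarith


/-! ### Doubling of variables -/

lemma penalty_test {n : ℕ} (a δ c : ℝ) (z : En n) :
    IsTestFn (fun x => a * psi (x - z) + (δ * psi x + c)) ∧
      ∀ x, HasFDerivAt (fun x => a * psi (x - z) + (δ * psi x + c))
        (innerSL ℝ (a • dpsi (x - z) + δ • dpsi x)) x := by
  refine ⟨((psi_test.1.comp_sub z).const_mul a).add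
    ((psi_test.1.const_mul δ).add (isTestFn_const c)), fun x => ?_⟩
  have h1 : HasFDerivAt (fun y : En n => psi (y - z)) (innerSL ℝ (dpsi (x - z))) x := by
    have := HasFDerivAt.comp (f := fun y : En n => y - z) (g := psi) x (psi_test.2 (x - z))
      ((hasFDerivAt_id x).sub_const z)
    rwa [ContinuousLinearMap.comp_id] at this
  have := (h1.const_mul a).add (((psi_test.2 x).const_mul δ).add_const c)
  rwa [← map_smul, ← map_smul, ← map_add] at this

lemma IsViscositySubsolution.touch {n : ℕ} {ν : Measure (En n)} {F : En n → En n → En n}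
    {b : En n → En n} {c f φ v u : En n → ℝ} {x : En n}
    (hv : IsViscositySubsolution ν F b c f φ v) (hu : IsTestFn u) (hle : ∀ y, v y ≤ u y)
    (hx : u x = v x) : v x ≤ φ x ∨ c x * v x - f x ≤ Lop ν F b u x := by
  have := hv.2.2 u hu x (fun y => by linarith [hle y]) hx
  rw [hx] at this
  rcases min_le_iff.1 this with h | h
  · right; linarith
  · left; linarith

lemma IsViscositySupersolution.touch {n : ℕ} {ν : Measure (En n)} {F : En n → En n → En n}
    {b : En n → En n} {c f φ v w : En n → ℝ} {x : En n}
    (hv : IsViscositySupersolution ν F b c f φ v) (hw : IsTestFn w) (hle : ∀ y, - v y ≤ w y)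
    (hx : w x = - v x) : φ x ≤ v x ∧ f x - c x * v x ≤ Lop ν F b w x := by
  have hx' : - w x = v x := by linarith
  have := hv.2.2 (fun y => - w y) hw.neg x (fun y => by linarith [hle y]) hx'
  rw [Lop_neg, hx'] at this
  have h := le_min_iff.1 this
  constructor <;> linarith [h.1, h.2]

lemma integral_jump_majorant {n : ℕ} {μ : Measure (En n)} {F : En n → En n → En n} {K : ℝ}
    (hK : 0 ≤ K) (hF : ∀ x, Measurable (F x))
    (hL : ∀ x₁ x₂ : En n, ∫⁻ y, ENNReal.ofReal (‖F x₁ y - F x₂ y‖ ^ 2) ∂μ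
      ≤ ENNReal.ofReal (K * ‖x₁ - x₂‖ ^ 2))
    (h : Integrable (fun y => jumpGauge (F 0 y)) μ) (x : En n) :
    Integrable (fun y => ‖F x y - F 0 y‖ ^ 2 / (1 + ‖x‖ ^ 2) + 2 * jumpGauge (F 0 y)) μ ∧
      ∫ y, (‖F x y - F 0 y‖ ^ 2 / (1 + ‖x‖ ^ 2) + 2 * jumpGauge (F 0 y)) ∂μ ≤
        K + 2 * ∫ y, jumpGauge (F 0 y) ∂μ := by
  obtain ⟨i1, h1⟩ := integrable_jump_sq hK hF hL x 0
  refine ⟨(i1.div_const _).add (h.const_mul 2), ?_⟩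
  rw [integral_add (i1.div_const _) (h.const_mul 2), integral_div, integral_const_mul]
  gcongr
  rw [div_le_iff₀ (by positivity)]
  rw [sub_zero] at h1
  linarith

/-- The inequality obtained at a maximum of the doubled and penalized difference: either
`v₁` is below the obstacle at `x₀` and `v₂` above it at `y₀`, or the zeroth
order terms are controlled by the penalization. -/
lemma doubling_ineq {n : ℕ} {ν : Measure (En n)} {F : En n → En n → En n} {b : En n → En n}
    {K : ℝ} (hK : 0 ≤ K) (hF : ∀ x, Measurable (F x))
    (hL : ∀ x₁ x₂ : En n, ∫⁻ y in {(0 : En n)}ᶜ, ENNReal.ofReal (‖F x₁ y - F x₂ y‖ ^ 2) ∂ν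
      ≤ ENNReal.ofReal (K * ‖x₁ - x₂‖ ^ 2))
    {Mb : ℝ} (hbM : ∀ x, ‖b x‖ ≤ Mb) {β : NNReal} (hbL : LipschitzWith β b)
    {c f φ v₁ v₂ : En n → ℝ} (h₁ : IsViscositySubsolution ν F b c f φ v₁)
    (h₂ : IsViscositySupersolution ν F b c f φ v₂) {a δ : ℝ} (ha : 0 ≤ a) (hδ : 0 ≤ δ)
    {x₀ y₀ : En n}
    (hmax : ∀ x y, v₁ x - v₂ y - a * psi (x - y) - δ * psi x - δ * psi y ≤
      v₁ x₀ - v₂ y₀ - a * psi (x₀ - y₀) - δ * psi x₀ - δ * psi y₀) :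
    (v₁ x₀ ≤ φ x₀ ∧ φ y₀ ≤ v₂ y₀) ∨
      c x₀ * v₁ x₀ - f x₀ + (f y₀ - c y₀ * v₂ y₀) ≤
        (a * ‖x₀ - y₀‖ ^ 2) * (β + K / 2) +
          δ * (2 * (Mb + K + 2 * ∫ y in {(0 : En n)}ᶜ, jumpGauge (F 0 y) ∂ν)) := by
  set Θ : ℝ := ∫ y in {(0 : En n)}ᶜ, jumpGauge (F 0 y) ∂ν with hΘ
  have hΘ0 : 0 ≤ Θ := integral_nonneg fun y => jumpGauge_nonneg _
  obtain ⟨hϕ, hϕd⟩ := penalty_test a δ (v₁ x₀ - a * psi (x₀ - y₀) - δ * psi x₀) y₀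
  obtain ⟨hχ, hχd⟩ := penalty_test a δ (- v₂ y₀ - a * psi (y₀ - x₀) - δ * psi y₀) x₀
  have hϕw : ∀ x, v₁ x ≤ a * psi (x - y₀) +
      (δ * psi x + (v₁ x₀ - a * psi (x₀ - y₀) - δ * psi x₀)) := fun x => by
    linarith [hmax x y₀]
  have hχw : ∀ y, - v₂ y ≤ a * psi (y - x₀) +
      (δ * psi y + (- v₂ y₀ - a * psi (y₀ - x₀) - δ * psi y₀)) := fun y => by
    have := hmax x₀ y
    rw [psi_sub_comm x₀ y, psi_sub_comm x₀ y₀] at this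
    linarith
  have hob : φ y₀ ≤ v₂ y₀ := (h₂.touch hχ hχw (by ring)).1
  by_cases hcon : v₁ x₀ ≤ φ x₀
  · exact Or.inl ⟨hcon, hob⟩
  right
  have hmain := nonlocal_le (b := b) (w₁ := v₁) (w₂ := fun y => - v₂ y) hK hF hL
    (H := fun y => a / 2 * ‖F x₀ y - F y₀ y‖ ^ 2 +
      (δ * (‖F x₀ y - F 0 y‖ ^ 2 / (1 + ‖x₀‖ ^ 2) + 2 * jumpGauge (F 0 y)) +
        δ * (‖F y₀ y - F 0 y‖ ^ 2 / (1 + ‖y₀‖ ^ 2) + 2 * jumpGauge (F 0 y))))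
    (B := a / 2 * (K * ‖x₀ - y₀‖ ^ 2) + (δ * (K + 2 * Θ) + δ * (K + 2 * Θ)))
    (Λ := c x₀ * v₁ x₀ - f x₀ + (f y₀ - c y₀ * v₂ y₀))
    h₁.1 h₂.1.neg hϕ hχ hϕw hχw (by ring) (by ring) (hϕd x₀) (hχd y₀) (by positivity) ?_ ?_ ?_
  · have hdx : ⟪b x₀ - b y₀, dpsi (x₀ - y₀)⟫ ≤ β * ‖x₀ - y₀‖ ^ 2 := by
      calc ⟪b x₀ - b y₀, dpsi (x₀ - y₀)⟫ ≤ ‖b x₀ - b y₀‖ * ‖dpsi (x₀ - y₀)‖ :=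
            real_inner_le_norm _ _
        _ ≤ (β * ‖x₀ - y₀‖) * ‖x₀ - y₀‖ := by
            gcongr
            · exact hbL.norm_sub_le x₀ y₀
            · exact norm_dpsi_le _
        _ = _ := by ring
    have hdp : ∀ x, ⟪b x, dpsi x⟫ ≤ Mb := fun x => by
      calc ⟪b x, dpsi x⟫ ≤ ‖b x‖ * ‖dpsi x‖ := real_inner_le_norm _ _
        _ ≤ ‖b x‖ * 1 := by gcongr; exact norm_dpsi_le_one _
        _ ≤ Mb := by rw [mul_one]; exact hbM x
    rw [dpsi_sub_comm x₀ y₀] at hmain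
    simp only [inner_add_right, inner_smul_right, inner_neg_right, inner_sub_left] at hmain hdx
    have e1 := mul_le_mul_of_nonneg_left hdx ha
    have e2 := mul_le_mul_of_nonneg_left (hdp x₀) hδ
    have e3 := mul_le_mul_of_nonneg_left (hdp y₀) hδ
    linarith
  · intro hA
    obtain ⟨i1, j1⟩ := integrable_jump_sq hK hF hL x₀ y₀
    obtain ⟨i2, j2⟩ := integral_jump_majorant hK hF hL hA x₀
    obtain ⟨i3, j3⟩ := integral_jump_majorant hK hF hL hA y₀
    refine ⟨(i1.const_mul _).add ((i2.const_mul δ).add (i3.const_mul δ)), ?_⟩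
    rw [integral_add (i1.const_mul _) ((i2.const_mul δ).fun_add (i3.const_mul δ)),
      integral_add (i2.const_mul δ) (i3.const_mul δ), integral_const_mul, integral_const_mul,
      integral_const_mul]
    gcongr
  · intro y
    have hm := hmax (x₀ + F x₀ y) (y₀ + F y₀ y)
    have s1 := psi_step (x₀ - y₀) (F x₀ y - F y₀ y)
    have s1' : ‖F x₀ y - F y₀ y‖ ^ 2 / (2 * (1 + ‖x₀ - y₀‖ ^ 2)) ≤
        ‖F x₀ y - F y₀ y‖ ^ 2 / 2 := by
      gcongr
      nlinarith [norm_nonneg (x₀ - y₀)]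
    have s2 := psi_step_compare x₀ (F x₀ y) (F 0 y)
    have s3 := psi_step_compare y₀ (F y₀ y) (F 0 y)
    have ez : x₀ + F x₀ y - (y₀ + F y₀ y) = x₀ - y₀ + (F x₀ y - F y₀ y) := by abel
    rw [ez] at hm
    rw [dpsi_sub_comm x₀ y₀]
    rw [inner_sub_right] at s1
    simp only [inner_add_left, real_inner_smul_left, inner_neg_left]
    have e1 := mul_le_mul_of_nonneg_left (s1.trans s1') ha
    have e2 := mul_le_mul_of_nonneg_left s2 hδ
    have e3 := mul_le_mul_of_nonneg_left s3 hδ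
    linarith
  · intro u w hu hw hu1 hw1 hu0 hw0
    have k1 := (h₁.touch hu hu1 hu0).resolve_left hcon
    have k2 := (h₂.touch hw hw1 hw0).2
    linarith

lemma exists_max_doubling {n : ℕ} {v₁ v₂ : En n → ℝ} (h₁ : Continuous v₁) (h₂ : Continuous v₂)
    {M₁ M₂ : ℝ} (hM₁ : ∀ x, |v₁ x| ≤ M₁) (hM₂ : ∀ x, |v₂ x| ≤ M₂) {a δ : ℝ} (ha : 0 ≤ a)
    (hδ : 0 < δ) :
    ∃ x₀ y₀ : En n, ∀ x y, v₁ x - v₂ y - a * psi (x - y) - δ * psi x - δ * psi y ≤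
      v₁ x₀ - v₂ y₀ - a * psi (x₀ - y₀) - δ * psi x₀ - δ * psi y₀ := by
  let G : En n × En n → ℝ := fun z =>
    v₁ z.1 - v₂ z.2 - a * psi (z.1 - z.2) - δ * psi z.1 - δ * psi z.2
  have hG : Continuous G := by
    have := continuous_psi (n := n)
    fun_prop
  set R : ℝ := 2 * (M₁ + M₂) / δ with hR
  have hev : ∀ᶠ z in Filter.cocompact (En n × En n), G z ≤ G (0, 0) := by
    filter_upwards [(isCompact_closedBall (0 : En n × En n)
      (Real.exp (2 * R))).compl_mem_cocompact] with z hz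
    by_contra! hlt
    refine hz ?_
    rw [mem_closedBall_zero_iff]
    have hb : δ * psi z.1 + δ * psi z.2 ≤ 2 * (M₁ + M₂) := by
      simp only [G, sub_zero, psi_zero, mul_zero] at hlt
      have := mul_nonneg ha (psi_nonneg (z.1 - z.2))
      linarith [(abs_le.1 (hM₁ z.1)).2, (abs_le.1 (hM₂ z.2)).1, (abs_le.1 (hM₁ 0)).1,
        (abs_le.1 (hM₂ 0)).2]
    have p1 := mul_nonneg hδ.le (psi_nonneg z.1)
    have p2 := mul_nonneg hδ.le (psi_nonneg z.2)
    refine max_le (norm_le_of_psi_le ?_) (norm_le_of_psi_le ?_) <;>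
    · rw [hR, le_div_iff₀ hδ]
      linarith
  obtain ⟨z, hz⟩ := hG.exists_forall_ge' (0, 0) hev
  exact ⟨z.1, z.2, fun x y => hz (x, y)⟩

/-- Comparison principle: bounded subsolutions lie below bounded supersolutions. -/
lemma comparison {n : ℕ} {ν : Measure (En n)} {F : En n → En n → En n} {b : En n → En n}
    {K : ℝ} (hK : 0 ≤ K) (hF : ∀ x, Measurable (F x))
    (hL : ∀ x₁ x₂ : En n, ∫⁻ y in {(0 : En n)}ᶜ, ENNReal.ofReal (‖F x₁ y - F x₂ y‖ ^ 2) ∂ν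
      ≤ ENNReal.ofReal (K * ‖x₁ - x₂‖ ^ 2))
    {Mb : ℝ} (hbM : ∀ x, ‖b x‖ ≤ Mb) {β : NNReal} (hbL : LipschitzWith β b)
    {c f φ v₁ v₂ : En n → ℝ} (hc : Continuous c) (hf : Continuous f) (hφ : Continuous φ)
    {c₀ : ℝ} (hc₀ : 0 < c₀) (hc_lb : ∀ x, c₀ ≤ c x)
    (h₁ : IsViscositySubsolution ν F b c f φ v₁)
    (h₂ : IsViscositySupersolution ν F b c f φ v₂) (z : En n) : v₁ z ≤ v₂ z := by
  by_contra! hlt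
  obtain ⟨M₁, hM₁⟩ := h₁.2.1
  obtain ⟨M₂, hM₂⟩ := h₂.2.1
  set σ : ℝ := v₁ z - v₂ z with hσ
  have hσ0 : 0 < σ := sub_pos.2 hlt
  set C : ℝ := 2 * (Mb + K + 2 * ∫ y in {(0 : En n)}ᶜ, jumpGauge (F 0 y) ∂ν) with hC
  have hC0 : 0 ≤ C := by
    have hΘ0 : 0 ≤ ∫ y in {(0 : En n)}ᶜ, jumpGauge (F 0 y) ∂ν :=
      integral_nonneg fun y => jumpGauge_nonneg _
    have : 0 ≤ Mb := (norm_nonneg _).trans (hbM 0)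
    positivity
  -- The localization parameter is fixed once and for all; only `a → ∞` below.
  obtain ⟨δ, hδ, hδ1, hδ2⟩ : ∃ δ : ℝ, 0 < δ ∧ δ * (2 * psi z) ≤ σ / 2 ∧ δ * C < c₀ * (σ / 2) := by
    have hz := psi_nonneg z
    have hA : 0 < min (σ / 2 / (2 * psi z + 1)) (c₀ * (σ / 2) / (C + 1)) := by positivity
    refine ⟨_, hA, ?_, ?_⟩
    · calc _ ≤ σ / 2 / (2 * psi z + 1) * (2 * psi z + 1) := by
            gcongr
            · exact min_le_left _ _
            · linarith
        _ = _ := by field_simp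
    · calc _ < min (σ / 2 / (2 * psi z + 1)) (c₀ * (σ / 2) / (C + 1)) * (C + 1) := by
            gcongr
            linarith
        _ ≤ c₀ * (σ / 2) / (C + 1) * (C + 1) := by
            gcongr
            exact min_le_right _ _
        _ = _ := by field_simp
  choose X Y hmax using fun j : ℕ =>
    exists_max_doubling h₁.1 h₂.1 hM₁ hM₂ (a := (j : ℝ) + 1) (δ := δ) (by positivity) hδ
  have hlow : ∀ j, σ / 2 ≤ v₁ (X j) - v₂ (Y j) := by
    intro j
    have := hmax j z z
    rw [sub_self, psi_zero] at this
    have p1 := mul_nonneg hδ.le (psi_nonneg (X j))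
    have p2 := mul_nonneg hδ.le (psi_nonneg (Y j))
    have p3 := mul_nonneg (by positivity : (0 : ℝ) ≤ (j : ℝ) + 1) (psi_nonneg (X j - Y j))
    linarith
  set D : ℝ := 2 * (M₁ + M₂) with hD
  have hbd : ∀ j : ℕ, ((j : ℝ) + 1) * psi (X j - Y j) ≤ D ∧ δ * psi (X j) ≤ D ∧
      δ * psi (Y j) ≤ D := by
    intro j
    have := hmax j 0 0
    rw [sub_self, psi_zero] at this
    have p1 := mul_nonneg hδ.le (psi_nonneg (X j))
    have p2 := mul_nonneg hδ.le (psi_nonneg (Y j))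
    have p3 := mul_nonneg (by positivity : (0 : ℝ) ≤ (j : ℝ) + 1) (psi_nonneg (X j - Y j))
    have q1 := (abs_le.1 (hM₁ (X j))).2
    have q2 := (abs_le.1 (hM₂ (Y j))).1
    have q3 := (abs_le.1 (hM₁ 0)).1
    have q4 := (abs_le.1 (hM₂ 0)).2
    refine ⟨?_, ?_, ?_⟩ <;> linarith
  set R : ℝ := Real.exp (2 * (D / δ)) with hR
  have hX : ∀ j, ‖X j‖ ≤ R := fun j =>
    norm_le_of_psi_le (by rw [le_div_iff₀ hδ]; linarith [(hbd j).2.1])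
  have hY : ∀ j, ‖Y j‖ ≤ R := fun j =>
    norm_le_of_psi_le (by rw [le_div_iff₀ hδ]; linarith [(hbd j).2.2])
  set S : ℝ := 2 * (1 + (2 * R) ^ 2) with hS
  have hsq : ∀ j, ‖X j - Y j‖ ^ 2 ≤ S * psi (X j - Y j) := by
    intro j
    have h := norm_sq_le_psi (X j - Y j)
    rw [div_le_iff₀ (by positivity)] at h
    have hle : ‖X j - Y j‖ ≤ 2 * R := (norm_sub_le _ _).trans (by linarith [hX j, hY j])
    refine h.trans ?_
    have hp := psi_nonneg (X j - Y j)
    calc 2 * psi (X j - Y j) * (1 + ‖X j - Y j‖ ^ 2)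
        ≤ 2 * psi (X j - Y j) * (1 + (2 * R) ^ 2) := by gcongr
      _ = S * psi (X j - Y j) := by rw [hS]; ring
  obtain ⟨x, -, ns, hns, hXx⟩ := (isCompact_closedBall (0 : En n) R).tendsto_subseq
    (x := X) fun j => by rw [mem_closedBall_zero_iff]; exact hX j
  have hinv : Filter.Tendsto (fun k => S * (D / ((ns k : ℝ) + 1))) Filter.atTop (nhds 0) := by
    have h0 : Filter.Tendsto (fun j : ℕ => (j : ℝ) + 1) Filter.atTop Filter.atTop :=
      Filter.tendsto_atTop_add_const_right _ _ tendsto_natCast_atTop_atTop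
    have := ((h0.const_div_atTop D).comp hns.tendsto_atTop).const_mul S
    rwa [mul_zero] at this
  have hdist : Filter.Tendsto (fun k => X (ns k) - Y (ns k)) Filter.atTop (nhds 0) := by
    rw [tendsto_zero_iff_norm_tendsto_zero]
    have h2 : Filter.Tendsto (fun k => ‖X (ns k) - Y (ns k)‖ ^ 2) Filter.atTop (nhds 0) := by
      refine squeeze_zero (fun k => by positivity) (fun k => (hsq (ns k)).trans ?_) hinv
      gcongr
      rw [le_div_iff₀ (by positivity)]
      linarith [(hbd (ns k)).1]
    have h3 := (Real.continuous_sqrt.tendsto 0).comp h2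
    rw [Real.sqrt_zero] at h3
    refine h3.congr fun k => ?_
    simp only [Function.comp_apply]
    rw [Real.sqrt_sq (norm_nonneg _)]
  have hYx : Filter.Tendsto (fun k => Y (ns k)) Filter.atTop (nhds x) := by
    have := hXx.sub hdist
    rw [sub_zero] at this
    refine this.congr fun k => ?_
    simp
  have lim : ∀ {g : En n → ℝ}, Continuous g →
      Filter.Tendsto (fun k => g (X (ns k))) Filter.atTop (nhds (g x)) ∧
      Filter.Tendsto (fun k => g (Y (ns k))) Filter.atTop (nhds (g x)) := fun hg =>
    ⟨(hg.tendsto x).comp hXx, (hg.tendsto x).comp hYx⟩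
  have hpen : Filter.Tendsto (fun k => ((ns k : ℝ) + 1) * ‖X (ns k) - Y (ns k)‖ ^ 2)
      Filter.atTop (nhds 0) := by
    have hE : Filter.Tendsto (fun k => S * (v₁ (X (ns k)) - v₂ (Y (ns k)) - δ * psi (X (ns k))
        - δ * psi (Y (ns k)) - (v₁ x - v₂ x - δ * psi x - δ * psi x)))
        Filter.atTop (nhds 0) := by
      have := ((((((lim h₁.1).1.sub (lim h₂.1).2).sub ((lim continuous_psi).1.const_mul δ)).sub
        ((lim continuous_psi).2.const_mul δ)).sub_const
        (v₁ x - v₂ x - δ * psi x - δ * psi x)).const_mul S)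
      rwa [sub_self, mul_zero] at this
    refine squeeze_zero (fun k => by positivity) (fun k => ?_) hE
    have := hmax (ns k) x x
    rw [sub_self, psi_zero] at this
    calc ((ns k : ℝ) + 1) * ‖X (ns k) - Y (ns k)‖ ^ 2
        ≤ ((ns k : ℝ) + 1) * (S * psi (X (ns k) - Y (ns k))) := by
          gcongr
          exact hsq _
      _ = S * (((ns k : ℝ) + 1) * psi (X (ns k) - Y (ns k))) := by ring
      _ ≤ _ := by
          gcongr
          linarith
  have hσx : σ / 2 ≤ v₁ x - v₂ x :=
    ge_of_tendsto' ((lim h₁.1).1.sub (lim h₂.1).2) fun k => hlow (ns k)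
  have hφlim : ∀ᶠ k in Filter.atTop, φ (X (ns k)) - φ (Y (ns k)) < σ / 2 := by
    have := (lim hφ).1.sub (lim hφ).2
    rw [sub_self] at this
    exact this.eventually_lt_const (by linarith)
  have hineq : ∀ᶠ k in Filter.atTop,
      c (X (ns k)) * v₁ (X (ns k)) - f (X (ns k)) +
        (f (Y (ns k)) - c (Y (ns k)) * v₂ (Y (ns k))) ≤
      (((ns k : ℝ) + 1) * ‖X (ns k) - Y (ns k)‖ ^ 2) * (β + K / 2) + δ * C := by
    filter_upwards [hφlim] with k hk
    rcases doubling_ineq hK hF hL hbM hbL h₁ h₂ (by positivity) hδ.le (hmax (ns k)) with h | h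
    · linarith [h.1, h.2, hlow (ns k)]
    · exact h
  have hfinal := le_of_tendsto_of_tendsto
    ((((lim hc).1.mul (lim h₁.1).1).sub (lim hf).1).add
      ((lim hf).2.sub ((lim hc).2.mul (lim h₂.1).2)))
    ((hpen.mul_const (β + K / 2)).add_const (δ * C)) hineq
  have hge : c₀ * (σ / 2) ≤ c x * (v₁ x - v₂ x) :=
    mul_le_mul (hc_lb x) hσx (by positivity) (hc₀.le.trans (hc_lb x))
  linarith

/-- Uniqueness for the stationary obstacle problem: under Assumption (Coefficients),
with `c, f, φ` continuous, `c ≥ c₀ > 0`, and `lim_{y→0} F(x,y) = 0`, the problem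
`min{−Lw + c w − f, w − φ} = 0` on `ℝⁿ` has at most one bounded viscosity solution. -/
theorem uniqueness_stationary
    (n : ℕ) (ν : Measure (En n)) [SigmaFinite ν]
    (F : En n → En n → En n) (b : En n → En n) (ρ : En n → ℝ) (K : ℝ)
    (hcoeff : CoefficientsAssumption ν F b ρ K)
    (c f φ : En n → ℝ) (hc : Continuous c) (hf : Continuous f) (hφ : Continuous φ)
    (c₀ : ℝ) (hc₀ : 0 < c₀) (hc_lb : ∀ x, c₀ ≤ c x)
    (hFlim : ∀ x : En n,
      Filter.Tendsto (F x) (nhdsWithin 0 {(0 : En n)}ᶜ) (nhds 0))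
    (v₁ v₂ : En n → ℝ)
    (hv₁ : IsViscositySolution ν F b c f φ v₁)
    (hv₂ : IsViscositySolution ν F b c f φ v₂) :
    v₁ = v₂ := by
  obtain ⟨hK, hF, -, -, hL, -, -, ⟨Mb, hbM⟩, ⟨β, hbL⟩⟩ := hcoeff
  have hFx : ∀ x, Measurable (F x) := fun x => hF.of_uncurry_left
  funext z
  exact le_antisymm
    (comparison hK.le hFx hL hbM hbL hc hf hφ hc₀ hc_lb hv₁.1 hv₂.2 z)
    (comparison hK.le hFx hL hbM hbL hc hf hφ hc₀ hc_lb hv₂.1 hv₁.2 z)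

end
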